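/- Let d ≥ 2 and 0 < β < α < 2, and set γ := min(α−β, α/2) if α ≠ 2β and γ := β/2 if α = 2β. Then there exists a constant c = c(d, α, β) > 0 with the following property. Let B = B(x₀, r) ⊂ ℝ^d be a ball with 0 < r ≤ 1, let κ, c₁ > 0, and let G₀, S : B × B → ℝ be measurable functions satisfying |G₀(x,y)| ≤ c₁·g_B(x,y) and |S(z,y)| ≤ κ·h_B(z,y) for all distinct pairs of points in B. Define recursively G_n(x,y) := ∫_B G_{n−1}(x,z)·S(z,y) dz for n ≥ 1. Then for every n ≥ 0 and all distinct x, y ∈ B: |G_n(x,y)| ≤ c₁·(κ·c·r^{γ})^n·g_B(x,y). -/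

import Mathlib

open MeasureTheory Metric Set

noncomputable section

/-- distance to the boundary `∂D` -/
def deltaD {d : ℕ} (D : Set (EuclideanSpace ℝ (Fin d))) (x : EuclideanSpace ℝ (Fin d)) : ℝ :=
  Metric.infDist x (frontier D)

/-- the kernel `g_D(x,y)`, comparable to the Green function of the killed
symmetric `α`-stable process in `D` -/
def gKer {d : ℕ} (α : ℝ) (D : Set (EuclideanSpace ℝ (Fin d)))
    (x y : EuclideanSpace ℝ (Fin d)) : ℝ :=
  ‖x - y‖ ^ (α - (d : ℝ)) * min 1 (deltaD D x / ‖x - y‖) ^ (α / 2)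
    * min 1 (deltaD D y / ‖x - y‖) ^ (α / 2)

/-- the kernel `h_D(x,y)` -/
def hKer {d : ℕ} (α β : ℝ) (D : Set (EuclideanSpace ℝ (Fin d)))
    (x y : EuclideanSpace ℝ (Fin d)) : ℝ :=
  if 2 * β < α then
    ‖x - y‖ ^ (α - β - (d : ℝ)) * min 1 (deltaD D y / ‖x - y‖) ^ (α / 2)
  else if α = 2 * β then
    ‖x - y‖ ^ (β - (d : ℝ)) * min 1 (deltaD D y / ‖x - y‖) ^ β
      * max 1 (Real.log (‖x - y‖ / deltaD D x))
  else
    ‖x - y‖ ^ (α - β - (d : ℝ)) * min 1 (deltaD D y / ‖x - y‖) ^ (α / 2)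
      * max 1 (‖x - y‖ / deltaD D x) ^ (β - α / 2)

/-!
Choosing a smaller power of `|x - y| / δ(x)` replaces `h_D` by a majorant which has the same shape
in all three regimes of `α` and `β`. A 3G-type inequality then factors `g_D(x, y)` out of
`g_D(x, z) h_D(z, y)`: if `z` is not much closer to `x` than `y` is, the kernel `g_D(x, z)` is
comparable to its value at distance `|x - y|` and `|z - y| ^ (α - β - d)` remains; otherwise
`|z - y|` is comparable to `|x - y|` and the remaining singularity at `x` is
`|x - z| ^ ((α - β) / 2 - d)`. Both are integrable with total mass of order `diam(D) ^ (α - β)`, so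
one convolution with `S` costs at most a factor `κ c diam(D) ^ (α - β)`. Since `γ ≤ α - β`, balls of
radius `r ≤ 1` are covered.
-/

section Truncation

variable {s t L u v w k p q a b ε : ℝ}

lemma rpow_le_mul_rpow_of_nonpos (hp : p ≤ 0) (hk : 0 < k) (hs : 0 ≤ s) (hL : 0 < L)
    (h : L ≤ k * s) : s ^ p ≤ k ^ (-p) * L ^ p := by
  calc s ^ p = k ^ (-p) * (k * s) ^ p := by
        rw [Real.mul_rpow hk.le hs, ← mul_assoc, ← Real.rpow_add hk, neg_add_cancel,
          Real.rpow_zero, one_mul]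
    _ ≤ k ^ (-p) * L ^ p := by
        exact mul_le_mul_of_nonneg_left (Real.rpow_le_rpow_of_nonpos hL h hp) (by positivity)

lemma min_one_div_rpow_le (hq : 0 ≤ q) (hk : 1 ≤ k) (hs : 0 < s) (hL : 0 < L) (hv : 0 ≤ v)
    (h : L ≤ k * s) : min 1 (v / s) ^ q ≤ k ^ q * min 1 (v / L) ^ q := by
  have hk₀ : 0 ≤ k := by linarith
  rw [← Real.mul_rpow hk₀ (by positivity), mul_min_of_nonneg _ _ hk₀, mul_one]
  gcongr
  rw [← mul_div_assoc, div_le_div_iff₀ hs hL]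
  nlinarith

lemma min_one_div_mul_max_one_div_le_max_one_div (hs : 0 < s) (ht : 0 ≤ t) (hw : 0 < w) :
    min 1 (w / s) * max 1 (t / w) ≤ max 1 (t / s) := by
  rw [mul_max_of_nonneg _ _ (by positivity), mul_one]
  gcongr
  · exact min_le_left _ _
  · calc min 1 (w / s) * (t / w) ≤ w / s * (t / w) := by gcongr; exact min_le_right _ _
      _ = t / s := by field_simp

lemma min_one_div_rpow_mul_max_one_div_rpow_le (ha : 0 ≤ a) (hab : a ≤ b) (hs : 0 < s)
    (ht : 0 ≤ t) (hw : 0 < w) :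
    min 1 (w / s) ^ b * max 1 (t / w) ^ a ≤ max 1 (t / s) ^ a := by
  calc min 1 (w / s) ^ b * max 1 (t / w) ^ a ≤ min 1 (w / s) ^ a * max 1 (t / w) ^ a := by
        gcongr ?_ * _
        exact Real.rpow_le_rpow_of_exponent_ge (by positivity) (min_le_left _ _) hab
    _ = (min 1 (w / s) * max 1 (t / w)) ^ a := (Real.mul_rpow (by positivity) (by positivity)).symm
    _ ≤ max 1 (t / s) ^ a := by
        gcongr
        exact min_one_div_mul_max_one_div_le_max_one_div hs ht hw

lemma min_one_div_rpow_mul_max_one_div_rpow_le_mul_div_rpow (ha : 0 ≤ a) (hab : a ≤ b)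
    (hs : 0 < s) (ht : 0 ≤ t) (hL : 0 ≤ L) (hw : 0 < w) (hk : 0 ≤ k) (hsL : s ≤ k * L)
    (htL : t ≤ k * L) :
    min 1 (w / s) ^ b * max 1 (t / w) ^ a ≤ k ^ a * (L / s) ^ a := by
  refine (min_one_div_rpow_mul_max_one_div_rpow_le ha hab hs ht hw).trans ?_
  rw [← Real.mul_rpow hk (by positivity), ← mul_div_assoc]
  gcongr
  exact max_le ((one_le_div hs).2 hsL) (by gcongr)

lemma min_one_div_mul_max_one_div_le_add_div (hs : 0 < s) (hw : 0 < w) (hv : 0 ≤ v)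
    (hwv : w ≤ v + t) : min 1 (w / s) * max 1 (t / w) ≤ (v + t) / s := by
  calc min 1 (w / s) * max 1 (t / w) ≤ w / s * max 1 (t / w) := by gcongr; exact min_le_right _ _
    _ = max w t / s := by
        rw [div_mul_eq_mul_div, mul_max_of_nonneg _ _ hw.le, mul_one, mul_div_cancel₀ _ hw.ne']
    _ ≤ (v + t) / s := by gcongr; exact max_le hwv (by linarith)

lemma add_mul_min_one_div_le (ht : 0 < t) (hv : 0 ≤ v) : (v + t) * min 1 (v / t) ≤ 2 * v := by
  calc (v + t) * min 1 (v / t) = v * min 1 (v / t) + t * min 1 (v / t) := by ring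
    _ ≤ v * 1 + t * (v / t) := by
        gcongr
        · exact min_le_left _ _
        · exact min_le_right _ _
    _ = 2 * v := by field_simp; norm_num

lemma min_one_div_mul_max_one_div_mul_min_one_div_le (hs : 0 < s) (ht : 0 < t) (hL : 0 < L)
    (hw : 0 < w) (hv : 0 ≤ v) (hwv : w ≤ v + t) (hLs : L ≤ 2 * s) (hts : t ≤ 3 * s) :
    min 1 (w / s) * max 1 (t / w) * min 1 (v / t) ≤ 4 * min 1 (v / L) := by
  rw [mul_min_of_nonneg _ _ (by norm_num : (0 : ℝ) ≤ 4)]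
  refine le_min ?_ ?_
  · have hts' : t / s ≤ 3 := (div_le_iff₀ hs).2 hts
    calc min 1 (w / s) * max 1 (t / w) * min 1 (v / t) ≤ max 1 (t / s) * 1 := by
          gcongr
          · exact min_one_div_mul_max_one_div_le_max_one_div hs ht.le hw
          · exact min_le_left _ _
      _ ≤ 4 * 1 := by gcongr; exact max_le (by norm_num) (by linarith)
  · calc min 1 (w / s) * max 1 (t / w) * min 1 (v / t) ≤ (v + t) / s * min 1 (v / t) := by
          gcongr
          exact min_one_div_mul_max_one_div_le_add_div hs hw hv hwv
      _ = (v + t) * min 1 (v / t) / s := by ring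
      _ ≤ 2 * v / s := div_le_div_of_nonneg_right (add_mul_min_one_div_le ht hv) hs.le
      _ ≤ 4 * (v / L) := by
          rw [← mul_div_assoc, div_le_div_iff₀ hs hL]
          nlinarith

lemma min_one_div_rpow_mul_max_one_div_rpow_mul_min_one_div_rpow_le (ha : 0 ≤ a) (hab : a ≤ b)
    (hs : 0 < s) (ht : 0 < t) (hL : 0 < L) (hw : 0 < w) (hv : 0 ≤ v) (hwv : w ≤ v + t)
    (hLs : L ≤ 2 * s) (hts : t ≤ 3 * s) :
    min 1 (w / s) ^ b * max 1 (t / w) ^ a * min 1 (v / t) ^ b ≤ 4 ^ b * min 1 (v / L) ^ b := by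
  calc min 1 (w / s) ^ b * max 1 (t / w) ^ a * min 1 (v / t) ^ b
      ≤ min 1 (w / s) ^ b * max 1 (t / w) ^ b * min 1 (v / t) ^ b := by
        gcongr
        exact le_max_left _ _
    _ = (min 1 (w / s) * max 1 (t / w) * min 1 (v / t)) ^ b := by
        rw [Real.mul_rpow (by positivity) (by positivity),
          Real.mul_rpow (by positivity) (by positivity)]
    _ ≤ (4 * min 1 (v / L)) ^ b :=
        Real.rpow_le_rpow (by positivity)
          (min_one_div_mul_max_one_div_mul_min_one_div_le hs ht hL hw hv hwv hLs hts)
          (ha.trans hab)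
    _ = 4 ^ b * min 1 (v / L) ^ b := Real.mul_rpow (by norm_num) (by positivity)

lemma rpow_sub_mul_div_rpow (hs : 0 < s) (hL : 0 < L) :
    s ^ (a - q) * (L / s) ^ (a / 2) * (L / s) ^ (b / 2) * L ^ (a - b - q) =
      L ^ (a - q) * (L ^ ((a - b) / 2) * s ^ ((a - b) / 2 - q)) := by
  rw [mul_assoc (s ^ _), ← Real.rpow_add (by positivity), Real.div_rpow hL.le hs.le,
    mul_div_left_comm, mul_right_comm, ← Real.rpow_add hL, ← Real.rpow_sub hs, ← mul_assoc,
    ← Real.rpow_add hL]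
  ring_nf

lemma max_one_log_le_mul_max_one_rpow (hε : 0 < ε) (hu : 0 ≤ u) :
    max 1 (Real.log u) ≤ max 1 ε⁻¹ * max 1 u ^ ε := by
  refine max_le ?_ ?_
  · exact one_le_mul_of_one_le_of_one_le (le_max_left _ _)
      (Real.one_le_rpow (le_max_left _ _) hε.le)
  · calc Real.log u ≤ u ^ ε / ε := Real.log_le_rpow_div hu hε
      _ = ε⁻¹ * u ^ ε := by rw [div_eq_inv_mul]
      _ ≤ max 1 ε⁻¹ * max 1 u ^ ε := by gcongr <;> exact le_max_right _ _

end Truncation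

section RadialIntegral

lemma subset_closedBall_diam {X : Type*} [PseudoMetricSpace X] {D : Set X} {y : X}
    (hD : Bornology.IsBounded D) (hy : y ∈ D) : D ⊆ closedBall y (diam D) :=
  fun _ hz => dist_le_diam_of_mem hD hz hy

lemma indicator_closedBall_comp_norm_sub {E : Type*} [SeminormedAddCommGroup E] (f : ℝ → ℝ)
    (y : E) (R : ℝ) :
    (closedBall y R).indicator (fun z => f ‖z - y‖) = fun z => (Iic R).indicator f ‖z - y‖ := by
  ext z
  simp [indicator, dist_eq_norm]

lemma pow_sub_one_smul_indicator_rpow_sub {n : ℕ} (hn : 1 ≤ n) (p R : ℝ) :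
    EqOn (fun ρ : ℝ => ρ ^ (n - 1) • (Iic R).indicator (fun τ => τ ^ (p - n)) ρ)
      ((Iic R).indicator fun ρ => ρ ^ (p - 1)) (Ioi 0) := by
  intro ρ (hρ : 0 < ρ)
  by_cases hρR : ρ ∈ Iic R
  · simp only [indicator_of_mem hρR, smul_eq_mul]
    rw [← Real.rpow_natCast, ← Real.rpow_add hρ, Nat.cast_sub hn, Nat.cast_one]
    ring_nf
  · simp only [indicator_of_notMem hρR, smul_zero]

variable {E : Type*} [NormedAddCommGroup E] [NormedSpace ℝ E] [FiniteDimensional ℝ E]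
  [Nontrivial E] [MeasurableSpace E] [BorelSpace E] (μ : Measure E) [μ.IsAddHaarMeasure] {p R : ℝ}

lemma integrableOn_closedBall_norm_sub_rpow (hp : 0 < p) (y : E) (R : ℝ) :
    IntegrableOn (fun z => ‖z - y‖ ^ (p - Module.finrank ℝ E)) (closedBall y R) μ := by
  rw [← integrable_indicator_iff measurableSet_closedBall,
    indicator_closedBall_comp_norm_sub (fun τ => τ ^ (p - Module.finrank ℝ E))]
  refine Integrable.comp_sub_right
    (f := fun z : E => (Iic R).indicator (fun τ => τ ^ (p - Module.finrank ℝ E)) ‖z‖) ?_ y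
  rw [integrable_fun_norm_addHaar μ, integrableOn_congr_fun
      (pow_sub_one_smul_indicator_rpow_sub Module.finrank_pos p R) measurableSet_Ioi,
    IntegrableOn, integrable_indicator_iff measurableSet_Iic, IntegrableOn,
    Measure.restrict_restrict measurableSet_Iic, Iic_inter_Ioi]
  exact (intervalIntegral.intervalIntegrable_rpow' (by linarith)).1

lemma setIntegral_closedBall_norm_sub_rpow (hp : 0 < p) (y : E) (hR : 0 ≤ R) :
    ∫ z in closedBall y R, ‖z - y‖ ^ (p - Module.finrank ℝ E) ∂μ =
      Module.finrank ℝ E * μ.real (ball 0 1) / p * R ^ p := by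
  rw [← integral_indicator measurableSet_closedBall,
    indicator_closedBall_comp_norm_sub (fun τ => τ ^ (p - Module.finrank ℝ E)),
    integral_sub_right_eq_self
      (fun z : E => (Iic R).indicator (fun τ => τ ^ (p - Module.finrank ℝ E)) ‖z‖) y,
    integral_fun_norm_addHaar μ, setIntegral_congr_fun measurableSet_Ioi
      (pow_sub_one_smul_indicator_rpow_sub Module.finrank_pos p R),
    setIntegral_indicator measurableSet_Iic, Ioi_inter_Iic, ← intervalIntegral.integral_of_le hR,
    integral_rpow (Or.inl (by linarith)), sub_add_cancel, Real.zero_rpow hp.ne', sub_zero,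
    nsmul_eq_mul, smul_eq_mul]
  ring

variable {D : Set E} {y : E}

lemma integrableOn_norm_sub_rpow (hp : 0 < p) (hD : Bornology.IsBounded D) (hy : y ∈ D) :
    IntegrableOn (fun z => ‖z - y‖ ^ (p - Module.finrank ℝ E)) D μ :=
  (integrableOn_closedBall_norm_sub_rpow μ hp y _).mono_set (subset_closedBall_diam hD hy)

lemma setIntegral_norm_sub_rpow_le (hp : 0 < p) (hD : Bornology.IsBounded D) (hy : y ∈ D) :
    ∫ z in D, ‖z - y‖ ^ (p - Module.finrank ℝ E) ∂μ ≤
      Module.finrank ℝ E * μ.real (ball 0 1) / p * diam D ^ p := by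
  rw [← setIntegral_closedBall_norm_sub_rpow μ hp y diam_nonneg]
  exact setIntegral_mono_set (integrableOn_closedBall_norm_sub_rpow μ hp y _)
    (Filter.Eventually.of_forall fun z => Real.rpow_nonneg (norm_nonneg _) _)
    (subset_closedBall_diam hD hy).eventuallyLE

end RadialIntegral

section BoundaryDistance

variable {d : ℕ} {D : Set (EuclideanSpace ℝ (Fin d))} {x y : EuclideanSpace ℝ (Fin d)}

lemma deltaD_nonneg : 0 ≤ deltaD D x := infDist_nonneg

lemma deltaD_pos (hD : IsOpen D) (hD' : D ≠ univ) (hx : x ∈ D) : 0 < deltaD D x := by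
  refine (isClosed_frontier.notMem_iff_infDist_pos (nonempty_frontier_iff.2 ⟨⟨x, hx⟩, hD'⟩)).1 ?_
  rw [hD.frontier_eq]
  exact fun h => h.2 hx

lemma deltaD_le_deltaD_add_norm_sub : deltaD D x ≤ deltaD D y + ‖x - y‖ := by
  rw [← dist_eq_norm]
  exact infDist_le_infDist_add_dist

lemma measurable_deltaD : Measurable (deltaD D) := (continuous_infDist_pt _).measurable

end BoundaryDistance

section Kernels

variable {d : ℕ} {α β : ℝ} {D : Set (EuclideanSpace ℝ (Fin d))}
  {x y z : EuclideanSpace ℝ (Fin d)}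

/-- A common majorant, up to a constant, of the three regimes of `h_D(x,y)`. The exponent `β / 2`
of the singularity at the boundary dominates both the logarithm and the power `β - α / 2`, and is
less than `α / 2`. -/
def hMajorant (α β : ℝ) (D : Set (EuclideanSpace ℝ (Fin d))) (x y : EuclideanSpace ℝ (Fin d)) :
    ℝ :=
  ‖x - y‖ ^ (α - β - (d : ℝ)) * min 1 (deltaD D y / ‖x - y‖) ^ (α / 2)
    * max 1 (‖x - y‖ / deltaD D x) ^ (β / 2)

lemma gKer_nonneg : 0 ≤ gKer α D x y := by
  have hx := deltaD_nonneg (D := D) (x := x)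
  have hy := deltaD_nonneg (D := D) (x := y)
  unfold gKer
  positivity

lemma hKer_nonneg : 0 ≤ hKer α β D x y := by
  have hy := deltaD_nonneg (D := D) (x := y)
  unfold hKer
  split_ifs <;> positivity

lemma measurable_gKer_mul_hKer : Measurable fun z => gKer α D x z * hKer α β D z y := by
  have hδ := measurable_deltaD (D := D)
  unfold gKer hKer
  split_ifs <;> fun_prop

lemma hKer_le_hMajorant (hβ : 0 < β) (hβα : β < α) :
    hKer α β D x y ≤ max 1 (β / 2)⁻¹ * hMajorant α β D x y := by
  have hx := deltaD_nonneg (D := D) (x := x)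
  have hy := deltaD_nonneg (D := D) (x := y)
  have hC : 1 ≤ max 1 (β / 2)⁻¹ := le_max_left _ _
  have hM : 1 ≤ max 1 (‖x - y‖ / deltaD D x) := le_max_left _ _
  rw [hMajorant, mul_left_comm]
  rcases lt_trichotomy (2 * β) α with h | h | h
  · rw [hKer, if_pos h]
    exact le_mul_of_one_le_right (by positivity)
      (one_le_mul_of_one_le_of_one_le hC (Real.one_le_rpow hM (by positivity)))
  · rw [hKer, if_neg h.not_lt, if_pos h.symm, show α - β = β by linarith,
      show α / 2 = β by linarith]
    gcongr
    exact max_one_log_le_mul_max_one_rpow (by positivity) (by positivity)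
  · rw [hKer, if_neg h.not_gt, if_neg h.ne]
    gcongr
    calc max 1 (‖x - y‖ / deltaD D x) ^ (β - α / 2)
        ≤ max 1 (‖x - y‖ / deltaD D x) ^ (β / 2) :=
          Real.rpow_le_rpow_of_exponent_le hM (by linarith)
      _ ≤ max 1 (β / 2)⁻¹ * max 1 (‖x - y‖ / deltaD D x) ^ (β / 2) :=
          le_mul_of_one_le_left (by positivity) hC

lemma gKer_mul_hMajorant_le_of_norm_sub_le (hβ : 0 < β) (hβα : β < α) (hαd : α ≤ d)
    (hx : 0 < deltaD D x) (hy : 0 < deltaD D y) (hz : 0 < deltaD D z)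
    (hxy : x ≠ y) (hzx : z ≠ x) (hzy : z ≠ y) (h : ‖x - y‖ ≤ 2 * ‖x - z‖) :
    gKer α D x z * hMajorant α β D z y ≤
      2 ^ (d + α) * gKer α D x y * ‖z - y‖ ^ (α - β - d) := by
  have hwv := deltaD_le_deltaD_add_norm_sub (D := D) (x := z) (y := y)
  have htri : ‖z - y‖ ≤ ‖x - y‖ + ‖x - z‖ := by
    simpa [add_comm, norm_sub_rev x z] using norm_sub_le_norm_sub_add_norm_sub z x y
  unfold gKer hMajorant
  have hL : 0 < ‖x - y‖ := norm_sub_pos_iff.2 hxy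
  have hs : 0 < ‖x - z‖ := norm_sub_pos_iff.2 hzx.symm
  have ht : 0 < ‖z - y‖ := norm_sub_pos_iff.2 hzy
  set L := ‖x - y‖
  set s := ‖x - z‖
  set t := ‖z - y‖
  have hα : 0 ≤ α / 2 := by linarith
  have hdist : s ^ (α - d) ≤ 2 ^ (d - α) * L ^ (α - d) := by
    simpa using rpow_le_mul_rpow_of_nonpos (p := α - d) (by linarith) two_pos hs.le hL h
  have hmin_x := min_one_div_rpow_le hα one_le_two hs hL hx.le h
  have hmin_yz := min_one_div_rpow_mul_max_one_div_rpow_mul_min_one_div_rpow_le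
    (a := β / 2) (b := α / 2) (by linarith) (by linarith) hs ht hL hz hy.le hwv h (by linarith)
  have hconst : (2 : ℝ) ^ (d - α) * 2 ^ (α / 2) * 4 ^ (α / 2) ≤ 2 ^ (d + α) := by
    rw [show (4 : ℝ) = 2 ^ (2 : ℝ) by norm_num, ← Real.rpow_mul two_pos.le,
      ← Real.rpow_add two_pos, ← Real.rpow_add two_pos]
    exact Real.rpow_le_rpow_of_exponent_le one_le_two (by linarith)
  calc _ = s ^ (α - d) * min 1 (deltaD D x / s) ^ (α / 2) *
        (min 1 (deltaD D z / s) ^ (α / 2) * max 1 (t / deltaD D z) ^ (β / 2) *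
          min 1 (deltaD D y / t) ^ (α / 2)) * t ^ (α - β - d) := by ring
    _ ≤ 2 ^ (d - α) * L ^ (α - d) * (2 ^ (α / 2) * min 1 (deltaD D x / L) ^ (α / 2)) *
        (4 ^ (α / 2) * min 1 (deltaD D y / L) ^ (α / 2)) * t ^ (α - β - d) := by gcongr
    _ = 2 ^ (d - α) * 2 ^ (α / 2) * 4 ^ (α / 2) * (L ^ (α - d) *
        min 1 (deltaD D x / L) ^ (α / 2) * min 1 (deltaD D y / L) ^ (α / 2)) *
          t ^ (α - β - d) := by ring
    _ ≤ _ := by gcongr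

lemma gKer_mul_hMajorant_le_of_le_norm_sub (hβ : 0 < β) (hβα : β < α) (hαd : α ≤ d + β)
    (hx : 0 < deltaD D x) (hy : 0 < deltaD D y) (hz : 0 < deltaD D z)
    (hxy : x ≠ y) (hzx : z ≠ x) (hzy : z ≠ y) (h : 2 * ‖x - z‖ ≤ ‖x - y‖) :
    gKer α D x z * hMajorant α β D z y ≤ 2 ^ (d + α) * gKer α D x y *
      (‖x - y‖ ^ ((α - β) / 2) * ‖x - z‖ ^ ((α - β) / 2 - d)) := by
  have hLst : ‖x - y‖ ≤ ‖x - z‖ + ‖z - y‖ := norm_sub_le_norm_sub_add_norm_sub x z y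
  have htri : ‖z - y‖ ≤ ‖x - y‖ + ‖x - z‖ := by
    simpa [add_comm, norm_sub_rev x z] using norm_sub_le_norm_sub_add_norm_sub z x y
  unfold gKer hMajorant
  have hL : 0 < ‖x - y‖ := norm_sub_pos_iff.2 hxy
  have hs : 0 < ‖x - z‖ := norm_sub_pos_iff.2 hzx.symm
  have ht : 0 < ‖z - y‖ := norm_sub_pos_iff.2 hzy
  set L := ‖x - y‖
  set s := ‖x - z‖
  set t := ‖z - y‖
  have hα : 0 ≤ α / 2 := by linarith
  have hLt : L ≤ 2 * t := by linarith
  have hLs : 1 ≤ L / s := by rw [one_le_div hs]; linarith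
  have hdist : t ^ (α - β - d) ≤ 2 ^ (d + β - α) * L ^ (α - β - d) := by
    have := rpow_le_mul_rpow_of_nonpos (p := α - β - d) (by linarith) two_pos ht.le hL hLt
    rwa [show -(α - β - d) = d + β - α by ring] at this
  have hmin_x := min_one_div_rpow_le hα hLs hs hL hx.le (div_mul_cancel₀ L hs.ne').ge
  have hmin_y := min_one_div_rpow_le hα one_le_two ht hL hy.le hLt
  have hmin_z := min_one_div_rpow_mul_max_one_div_rpow_le_mul_div_rpow (a := β / 2) (b := α / 2)
    (by linarith) (by linarith) hs ht.le hL.le hz two_pos.le (by linarith) (by linarith)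
  have hconst : (2 : ℝ) ^ (β / 2) * 2 ^ (d + β - α) * 2 ^ (α / 2) ≤ 2 ^ (d + α) := by
    rw [← Real.rpow_add two_pos, ← Real.rpow_add two_pos]
    exact Real.rpow_le_rpow_of_exponent_le one_le_two (by linarith)
  calc _ = s ^ (α - d) * min 1 (deltaD D x / s) ^ (α / 2) *
        (min 1 (deltaD D z / s) ^ (α / 2) * max 1 (t / deltaD D z) ^ (β / 2)) *
          t ^ (α - β - d) * min 1 (deltaD D y / t) ^ (α / 2) := by ring
    _ ≤ s ^ (α - d) * ((L / s) ^ (α / 2) * min 1 (deltaD D x / L) ^ (α / 2)) *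
        (2 ^ (β / 2) * (L / s) ^ (β / 2)) * (2 ^ (d + β - α) * L ^ (α - β - d)) *
          (2 ^ (α / 2) * min 1 (deltaD D y / L) ^ (α / 2)) := by gcongr
    _ = 2 ^ (β / 2) * 2 ^ (d + β - α) * 2 ^ (α / 2) *
        (s ^ (α - d) * (L / s) ^ (α / 2) * (L / s) ^ (β / 2) * L ^ (α - β - d)) *
          min 1 (deltaD D x / L) ^ (α / 2) * min 1 (deltaD D y / L) ^ (α / 2) := by ring
    _ = 2 ^ (β / 2) * 2 ^ (d + β - α) * 2 ^ (α / 2) * (L ^ (α - d) *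
        min 1 (deltaD D x / L) ^ (α / 2) * min 1 (deltaD D y / L) ^ (α / 2)) *
          (L ^ ((α - β) / 2) * s ^ ((α - β) / 2 - d)) := by rw [rpow_sub_mul_div_rpow hs hL]; ring
    _ ≤ _ := by gcongr

/-- The sum of the singularities at `y` and `x` left over from `g_D(x,z) h_D(z,y)` after `g_D(x,y)`
has been factored out, where `p = α - β`. -/
def singularPair (p : ℝ) (x y z : EuclideanSpace ℝ (Fin d)) : ℝ :=
  ‖z - y‖ ^ (p - d) + ‖x - y‖ ^ (p / 2) * ‖z - x‖ ^ (p / 2 - d)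

lemma gKer_mul_hKer_le (hβ : 0 < β) (hβα : β < α) (hαd : α ≤ d)
    (hx : 0 < deltaD D x) (hy : 0 < deltaD D y) (hz : 0 < deltaD D z)
    (hxy : x ≠ y) (hzx : z ≠ x) (hzy : z ≠ y) :
    gKer α D x z * hKer α β D z y ≤
      max 1 (β / 2)⁻¹ * 2 ^ (d + α) * gKer α D x y * singularPair (α - β) x y z := by
  have hg := gKer_nonneg (α := α) (D := D) (x := x) (y := y)
  have key : gKer α D x z * hMajorant α β D z y ≤
      2 ^ (d + α) * gKer α D x y * singularPair (α - β) x y z := by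
    rcases le_total ‖x - y‖ (2 * ‖x - z‖) with h | h
    · refine (gKer_mul_hMajorant_le_of_norm_sub_le hβ hβα hαd hx hy hz hxy hzx hzy h).trans ?_
      gcongr
      exact le_add_of_nonneg_right (by positivity)
    · refine (gKer_mul_hMajorant_le_of_le_norm_sub hβ hβα (by linarith) hx hy hz hxy hzx hzy
        h).trans ?_
      gcongr
      rw [singularPair, norm_sub_rev z x]
      exact le_add_of_nonneg_left (by positivity)
  calc gKer α D x z * hKer α β D z y
      ≤ gKer α D x z * (max 1 (β / 2)⁻¹ * hMajorant α β D z y) :=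
        mul_le_mul_of_nonneg_left (hKer_le_hMajorant hβ hβα) gKer_nonneg
    _ = max 1 (β / 2)⁻¹ * (gKer α D x z * hMajorant α β D z y) := by ring
    _ ≤ max 1 (β / 2)⁻¹ * (2 ^ (d + α) * gKer α D x y * singularPair (α - β) x y z) := by gcongr
    _ = _ := by ring

end Kernels

section Convolution

lemma ne_univ_of_isBounded {E : Type*} [NormedAddCommGroup E] [NormedSpace ℝ E] [Nontrivial E]
    {D : Set E} (hD : Bornology.IsBounded D) : D ≠ univ := by
  rintro rfl
  exact NormedSpace.unbounded_univ ℝ E hD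

variable {d : ℕ} [NeZero d] {α β p : ℝ} {D : Set (EuclideanSpace ℝ (Fin d))}
  {x y : EuclideanSpace ℝ (Fin d)}

lemma integrableOn_singularPair (hp : 0 < p) (hD : Bornology.IsBounded D) (hx : x ∈ D)
    (hy : y ∈ D) : IntegrableOn (singularPair p x y) D := by
  have hIy := integrableOn_norm_sub_rpow volume hp hD hy
  have hIx := integrableOn_norm_sub_rpow volume (half_pos hp) hD hx
  rw [finrank_euclideanSpace_fin] at hIx hIy
  exact hIy.add (hIx.const_mul _)

lemma setIntegral_singularPair_le (hp : 0 < p) (hD : Bornology.IsBounded D) (hx : x ∈ D)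
    (hy : y ∈ D) :
    ∫ z in D, singularPair p x y z ≤
      3 * d * volume.real (ball (0 : EuclideanSpace ℝ (Fin d)) 1) / p * diam D ^ p := by
  have hIy := integrableOn_norm_sub_rpow volume hp hD hy
  have hIx := integrableOn_norm_sub_rpow volume (half_pos hp) hD hx
  have hby := setIntegral_norm_sub_rpow_le volume hp hD hy
  have hbx := setIntegral_norm_sub_rpow_le volume (half_pos hp) hD hx
  have hxy : ‖x - y‖ ≤ diam D := by
    rw [← dist_eq_norm]
    exact dist_le_diam_of_mem hD hx hy
  have hdiam : diam D ^ p = diam D ^ (p / 2) * diam D ^ (p / 2) := by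
    rw [← Real.rpow_add_of_nonneg diam_nonneg (by positivity) (by positivity), add_halves]
  rw [finrank_euclideanSpace_fin] at hIx hIy hbx hby
  set ω := volume.real (ball (0 : EuclideanSpace ℝ (Fin d)) 1)
  calc ∫ z in D, singularPair p x y z
      = (∫ z in D, ‖z - y‖ ^ (p - d)) + ‖x - y‖ ^ (p / 2) * ∫ z in D, ‖z - x‖ ^ (p / 2 - d) := by
        rw [← integral_const_mul, ← integral_add hIy (hIx.const_mul _)]
        rfl
    _ ≤ d * ω / p * diam D ^ p + diam D ^ (p / 2) * (d * ω / (p / 2) * diam D ^ (p / 2)) := by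
        gcongr
    _ = 3 * d * ω / p * diam D ^ p := by
        rw [hdiam]
        field_simp
        norm_num

lemma ae_restrict_gKer_mul_hKer_le (hβ : 0 < β) (hβα : β < α) (hαd : α ≤ d) (hD : IsOpen D)
    (hD' : D ≠ univ) (hx : x ∈ D) (hy : y ∈ D) (hxy : x ≠ y) :
    ∀ᵐ z ∂volume.restrict D, gKer α D x z * hKer α β D z y ≤
      max 1 (β / 2)⁻¹ * 2 ^ (d + α) * gKer α D x y * singularPair (α - β) x y z := by
  filter_upwards [ae_restrict_mem hD.measurableSet, ae_restrict_of_ae (Measure.ae_ne volume x),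
    ae_restrict_of_ae (Measure.ae_ne volume y)] with z hz hzx hzy
  exact gKer_mul_hKer_le hβ hβα hαd (deltaD_pos hD hD' hx) (deltaD_pos hD hD' hy)
    (deltaD_pos hD hD' hz) hxy hzx hzy

lemma integrableOn_gKer_mul_hKer (hβ : 0 < β) (hβα : β < α) (hαd : α ≤ d) (hD : IsOpen D)
    (hD' : Bornology.IsBounded D) (hx : x ∈ D) (hy : y ∈ D) (hxy : x ≠ y) :
    IntegrableOn (fun z => gKer α D x z * hKer α β D z y) D := by
  refine Integrable.mono'
    ((integrableOn_singularPair (sub_pos.2 hβα) hD' hx hy).const_mul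
      (max 1 (β / 2)⁻¹ * 2 ^ (d + α) * gKer α D x y))
    measurable_gKer_mul_hKer.aestronglyMeasurable ?_
  filter_upwards [ae_restrict_gKer_mul_hKer_le hβ hβα hαd hD (ne_univ_of_isBounded hD') hx hy hxy]
    with z hz
  rwa [Real.norm_of_nonneg (mul_nonneg gKer_nonneg hKer_nonneg)]

/-- The constant `c(d, α, β)` of the contraction estimate. -/
def contractionConst (d : ℕ) (α β : ℝ) : ℝ :=
  max 1 (β / 2)⁻¹ * 2 ^ (d + α) *
    (3 * d * volume.real (ball (0 : EuclideanSpace ℝ (Fin d)) 1) / (α - β))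

lemma contractionConst_pos (hβα : β < α) : 0 < contractionConst d α β := by
  have hω : 0 < volume.real (ball (0 : EuclideanSpace ℝ (Fin d)) 1) :=
    ENNReal.toReal_pos (measure_ball_pos _ _ one_pos).ne' measure_ball_lt_top.ne
  have hd : (0 : ℝ) < d := by exact_mod_cast NeZero.pos d
  have := sub_pos.2 hβα
  unfold contractionConst
  positivity

lemma setIntegral_gKer_mul_hKer_le (hβ : 0 < β) (hβα : β < α) (hαd : α ≤ d) (hD : IsOpen D)
    (hD' : Bornology.IsBounded D) (hx : x ∈ D) (hy : y ∈ D) (hxy : x ≠ y) :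
    ∫ z in D, gKer α D x z * hKer α β D z y ≤
      contractionConst d α β * diam D ^ (α - β) * gKer α D x y := by
  have hg := gKer_nonneg (α := α) (D := D) (x := x) (y := y)
  set K := max 1 (β / 2)⁻¹ * 2 ^ (d + α) * gKer α D x y with hK
  calc ∫ z in D, gKer α D x z * hKer α β D z y
      ≤ ∫ z in D, K * singularPair (α - β) x y z :=
        integral_mono_ae (integrableOn_gKer_mul_hKer hβ hβα hαd hD hD' hx hy hxy)
          ((integrableOn_singularPair (sub_pos.2 hβα) hD' hx hy).const_mul K)
          (ae_restrict_gKer_mul_hKer_le hβ hβα hαd hD (ne_univ_of_isBounded hD') hx hy hxy)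
    _ = K * ∫ z in D, singularPair (α - β) x y z := integral_const_mul _ _
    _ ≤ K * (3 * d * volume.real (ball (0 : EuclideanSpace ℝ (Fin d)) 1) / (α - β) *
          diam D ^ (α - β)) := by
        gcongr
        exact setIntegral_singularPair_le (sub_pos.2 hβα) hD' hx hy
    _ = contractionConst d α β * diam D ^ (α - β) * gKer α D x y := by
        rw [contractionConst, hK]
        ring

end Convolution

section Iteration

variable {X : Type*} [MeasurableSpace X] {μ : Measure X} {D : Set X}

lemma abs_setIntegral_mul_le {u v g h : X → ℝ} {A κ : ℝ}
    (hgh : IntegrableOn (fun z => g z * h z) D μ)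
    (hu : ∀ᵐ z ∂μ.restrict D, |u z| ≤ A * g z) (hv : ∀ᵐ z ∂μ.restrict D, |v z| ≤ κ * h z) :
    |∫ z in D, u z * v z ∂μ| ≤ A * κ * ∫ z in D, g z * h z ∂μ := by
  rw [← integral_const_mul, ← Real.norm_eq_abs]
  refine norm_integral_le_of_norm_le (hgh.const_mul _) ?_
  filter_upwards [hu, hv] with z huz hvz
  calc ‖u z * v z‖ = |u z| * |v z| := abs_mul _ _
    _ ≤ A * g z * (κ * h z) :=
        mul_le_mul huz hvz (abs_nonneg _) ((abs_nonneg _).trans huz)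
    _ = A * κ * (g z * h z) := by ring

lemma abs_kernel_iterate_le [MeasurableSingletonClass X] [NullSingletonClass μ]
    {g h S : X → X → ℝ} {G : ℕ → X → X → ℝ} {c₁ κ q : ℝ} (hD : MeasurableSet D)
    (hc₁ : 0 ≤ c₁) (hκ : 0 ≤ κ) (hq : 0 ≤ q)
    (hgh : ∀ x ∈ D, ∀ y ∈ D, x ≠ y → IntegrableOn (fun z => g x z * h z y) D μ)
    (hcontr : ∀ x ∈ D, ∀ y ∈ D, x ≠ y → ∫ z in D, g x z * h z y ∂μ ≤ q * g x y)
    (hG₀ : ∀ x ∈ D, ∀ y ∈ D, x ≠ y → |G 0 x y| ≤ c₁ * g x y)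
    (hS : ∀ z ∈ D, ∀ y ∈ D, z ≠ y → |S z y| ≤ κ * h z y)
    (hG : ∀ n, ∀ x ∈ D, ∀ y ∈ D, G (n + 1) x y = ∫ z in D, G n x z * S z y ∂μ) (n : ℕ) :
    ∀ x ∈ D, ∀ y ∈ D, x ≠ y → |G n x y| ≤ c₁ * (κ * q) ^ n * g x y := by
  induction n with
  | zero => simpa using hG₀
  | succ n ih =>
    intro x hx y hy hxy
    have hGn : ∀ᵐ z ∂μ.restrict D, |G n x z| ≤ c₁ * (κ * q) ^ n * g x z := by
      filter_upwards [ae_restrict_mem hD, ae_restrict_of_ae (Measure.ae_ne μ x)] with z hz hzx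
      exact ih x hx z hz hzx.symm
    have hSy : ∀ᵐ z ∂μ.restrict D, |S z y| ≤ κ * h z y := by
      filter_upwards [ae_restrict_mem hD, ae_restrict_of_ae (Measure.ae_ne μ y)] with z hz hzy
      exact hS z hz y hy hzy
    calc |G (n + 1) x y| = |∫ z in D, G n x z * S z y ∂μ| := by rw [hG n x hx y hy]
      _ ≤ c₁ * (κ * q) ^ n * κ * ∫ z in D, g x z * h z y ∂μ :=
          abs_setIntegral_mul_le (hgh x hx y hy hxy) hGn hSy
      _ ≤ c₁ * (κ * q) ^ n * κ * (q * g x y) := by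
          gcongr
          exact hcontr x hx y hy hxy
      _ = c₁ * (κ * q) ^ (n + 1) * g x y := by ring

end Iteration

theorem perturbation_series_bound_general (d : ℕ) (α β : ℝ) (hβ : 0 < β) (hβα : β < α)
    (hαd : α ≤ d) :
    ∃ c > 0, ∀ D : Set (EuclideanSpace ℝ (Fin d)), IsOpen D → Bornology.IsBounded D →
      ∀ κ c₁ : ℝ, 0 ≤ κ → 0 ≤ c₁ →
      ∀ (G : ℕ → EuclideanSpace ℝ (Fin d) → EuclideanSpace ℝ (Fin d) → ℝ)
        (S : EuclideanSpace ℝ (Fin d) → EuclideanSpace ℝ (Fin d) → ℝ),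
        Measurable (Function.uncurry (G 0)) → Measurable (Function.uncurry S) →
        (∀ x ∈ D, ∀ y ∈ D, x ≠ y → |G 0 x y| ≤ c₁ * gKer α D x y) →
        (∀ z ∈ D, ∀ y ∈ D, z ≠ y → |S z y| ≤ κ * hKer α β D z y) →
        (∀ n, ∀ x ∈ D, ∀ y ∈ D, G (n + 1) x y = ∫ z in D, G n x z * S z y) →
        ∀ n, ∀ x ∈ D, ∀ y ∈ D, x ≠ y →
          |G n x y| ≤ c₁ * (κ * (c * diam D ^ (α - β))) ^ n * gKer α D x y := by
  have : NeZero d := ⟨fun hd => by subst hd; norm_num at hαd; linarith⟩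
  refine ⟨contractionConst d α β, contractionConst_pos hβα,
    fun D hD hD' κ c₁ hκ hc₁ G S _ _ hG₀ hS hG => ?_⟩
  exact abs_kernel_iterate_le hD.measurableSet hc₁ hκ
    (mul_nonneg (contractionConst_pos hβα).le (Real.rpow_nonneg diam_nonneg _))
    (fun x hx y hy => integrableOn_gKer_mul_hKer hβ hβα hαd hD hD' hx hy)
    (fun x hx y hy => setIntegral_gKer_mul_hKer_le hβ hβα hαd hD hD' hx hy) hG₀ hS hG

lemma diam_ball_rpow_le {X : Type*} [PseudoMetricSpace X] (x₀ : X) {r p γ : ℝ} (hr : 0 < r)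
    (hr₁ : r ≤ 1) (hp : 0 ≤ p) (hγ : γ ≤ p) : diam (ball x₀ r) ^ p ≤ 2 ^ p * r ^ γ := by
  calc diam (ball x₀ r) ^ p ≤ (2 * r) ^ p := by
        gcongr
        exact diam_ball hr.le
    _ = 2 ^ p * r ^ p := Real.mul_rpow two_pos.le hr.le
    _ ≤ 2 ^ p * r ^ γ :=
        mul_le_mul_of_nonneg_left (Real.rpow_le_rpow_of_exponent_ge hr hr₁ hγ) (by positivity)

/-- the contraction estimate `|G_n(x,y)| ≤ c₁ (κ c r^γ)^n g_B(x,y)` for the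
perturbation series on small balls. -/
theorem perturbation_series_bound (d : ℕ) (hd : 2 ≤ d) (α β : ℝ)
    (hβ : 0 < β) (hβα : β < α) (hα : α < 2) :
    ∃ c > 0, ∀ (x₀ : EuclideanSpace ℝ (Fin d)) (r : ℝ), 0 < r → r ≤ 1 →
      ∀ κ c₁ : ℝ, 0 < κ → 0 < c₁ →
      ∀ (G : ℕ → EuclideanSpace ℝ (Fin d) → EuclideanSpace ℝ (Fin d) → ℝ)
        (S : EuclideanSpace ℝ (Fin d) → EuclideanSpace ℝ (Fin d) → ℝ),
        Measurable (Function.uncurry (G 0)) → Measurable (Function.uncurry S) →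
        (∀ x ∈ Metric.ball x₀ r, ∀ y ∈ Metric.ball x₀ r, x ≠ y →
          |G 0 x y| ≤ c₁ * gKer α (Metric.ball x₀ r) x y) →
        (∀ z ∈ Metric.ball x₀ r, ∀ y ∈ Metric.ball x₀ r, z ≠ y →
          |S z y| ≤ κ * hKer α β (Metric.ball x₀ r) z y) →
        (∀ n : ℕ, ∀ x ∈ Metric.ball x₀ r, ∀ y ∈ Metric.ball x₀ r,
          G (n + 1) x y = ∫ z in Metric.ball x₀ r, G n x z * S z y) →
        ∀ n : ℕ, ∀ x ∈ Metric.ball x₀ r, ∀ y ∈ Metric.ball x₀ r, x ≠ y →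
          |G n x y| ≤
            c₁ * (κ * c * r ^ (if α = 2 * β then β / 2 else min (α - β) (α / 2))) ^ n *
              gKer α (Metric.ball x₀ r) x y := by
  have hαd : α ≤ d := hα.le.trans (by exact_mod_cast hd)
  obtain ⟨c, hc, hbound⟩ := perturbation_series_bound_general d α β hβ hβα hαd
  refine ⟨c * 2 ^ (α - β), by positivity,
    fun x₀ r hr hr₁ κ c₁ hκ hc₁ G S hG₀m hSm hG₀ hS hG n x hx y hy hxy => ?_⟩
  refine (hbound _ isOpen_ball isBounded_ball κ c₁ hκ.le hc₁.le G S hG₀m hSm hG₀ hS hG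
    n x hx y hy hxy).trans ?_
  have hγ : (if α = 2 * β then β / 2 else min (α - β) (α / 2)) ≤ α - β := by
    split_ifs with h
    · linarith
    · exact min_le_left _ _
  refine mul_le_mul_of_nonneg_right ?_ gKer_nonneg
  rw [mul_assoc κ, mul_assoc c]
  gcongr
  exact diam_ball_rpow_le x₀ hr hr₁ (sub_pos.2 hβα).le hγ
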